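/- Let f be an integrable probability density on ℝ with Fourier transform 𝔽[f](y) = ∫ f(t) e^{-iyt} dt, and let F(x) = ∫_{-∞}^x f(t) dt be its cumulative distribution function. Then for every x at which F is continuous, F(x) = (1/2π) ∫_{-∞}^{+∞} (𝔽[f](y)/(iy)) e^{ixy} dy + 1/2, where the integral is taken as a principal value. -/

import Mathlib

open MeasureTheory Complex Filter

lemma aux_inner (R s : ℝ) : ∫ x in (0:ℝ)..R, Real.sin x * Real.exp (-x * s)
    = (1 + s ^ 2)⁻¹ - Real.exp (-R * s) * ((Real.cos R + s * Real.sin R) / (1 + s ^ 2)) := by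
  have h1 : (1 + s ^ 2) ≠ 0 := by positivity
  have hd : ∀ x ∈ Set.uIcc 0 R, HasDerivAt
      (fun x => - (Real.exp (-x * s) * ((Real.cos x + s * Real.sin x) / (1 + s ^ 2))))
      (Real.sin x * Real.exp (-x * s)) x := by
    intro x _
    have e : HasDerivAt (fun x : ℝ => Real.exp (-x * s)) (Real.exp (-x * s) * (-1 * s)) x :=
      (((hasDerivAt_id x).neg).mul_const s).exp
    have c := ((Real.hasDerivAt_cos x).add ((Real.hasDerivAt_sin x).const_mul s)).div_const (1 + s ^ 2)
    refine ((e.mul c).neg).congr_deriv ?_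
    simp only [Pi.add_apply]
    field_simp
    ring
  rw [intervalIntegral.integral_eq_sub_of_hasDerivAt hd]
  · simp
    ring
  · apply Continuous.intervalIntegrable
    fun_prop

lemma aux_exp_int {x : ℝ} (hx : 0 < x) :
    IntegrableOn (fun s : ℝ => Real.exp (-x * s)) (Set.Ioi 0) :=
  integrableOn_exp_mul_Ioi (by linarith) 0

lemma aux_exp_val {x : ℝ} (hx : 0 < x) :
    ∫ s in Set.Ioi (0:ℝ), Real.exp (-x * s) = x⁻¹ := by
  rw [integral_exp_mul_Ioi (by linarith) 0]
  simp

lemma aux_fubini {R : ℝ} (hR : 0 ≤ R) : ∫ x in (0:ℝ)..R, Real.sinc x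
    = ∫ s in Set.Ioi (0:ℝ), ((1 + s ^ 2)⁻¹
        - Real.exp (-R * s) * ((Real.cos R + s * Real.sin R) / (1 + s ^ 2))) := by
  simp_rw [← aux_inner]
  simp_rw [intervalIntegral.integral_of_le hR]
  rw [integral_integral_swap (μ := volume.restrict (Set.Ioi (0:ℝ)))
    (f := fun s x => Real.sin x * Real.exp (-x * s))]
  · apply setIntegral_congr_fun measurableSet_Ioc
    intro x hx
    simp only
    rw [integral_const_mul, aux_exp_val hx.1, Real.sinc_of_ne_zero hx.1.ne']
    rfl
  · rw [integrable_prod_iff' (by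
      apply Continuous.aestronglyMeasurable; unfold Function.uncurry; fun_prop)]
    constructor
    · filter_upwards [ae_restrict_mem measurableSet_Ioc] with x hx
      exact (aux_exp_int hx.1).const_mul (Real.sin x)
    · have : IntegrableOn (fun x => |Real.sinc x|) (Set.Ioc 0 R) :=
        (Real.integrable_sinc (μ := volume.restrict (Set.Ioc 0 R))).abs
      refine this.congr ?_
      filter_upwards [ae_restrict_mem measurableSet_Ioc] with x hx
      simp only [Function.uncurry, norm_mul, Real.norm_eq_abs, Real.abs_exp]
      rw [integral_const_mul, aux_exp_val hx.1, Real.sinc_of_ne_zero hx.1.ne', abs_div,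
        abs_of_pos hx.1]
      rfl

lemma aux_dirichlet : Tendsto (fun R : ℝ => ∫ x in (0:ℝ)..R, Real.sinc x) atTop
    (nhds (Real.pi / 2)) := by
  have key : Tendsto (fun R : ℝ => ∫ s in Set.Ioi (0:ℝ), ((1 + s ^ 2)⁻¹
        - Real.exp (-R * s) * ((Real.cos R + s * Real.sin R) / (1 + s ^ 2)))) atTop
      (nhds (∫ s in Set.Ioi (0:ℝ), (1 + s ^ 2)⁻¹)) := by
    have hb : ∀ R s : ℝ, 0 < s → |(Real.cos R + s * Real.sin R) / (1 + s ^ 2)| ≤ 2 := by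
      intro R s hs
      rw [abs_div, abs_of_pos (by positivity : (0:ℝ) < 1 + s ^ 2), div_le_iff₀ (by positivity)]
      have h1 := Real.abs_cos_le_one R
      have h2 := Real.abs_sin_le_one R
      calc _ ≤ |Real.cos R| + |s * Real.sin R| := abs_add_le _ _
        _ = |Real.cos R| + s * |Real.sin R| := by rw [abs_mul, abs_of_pos hs]
        _ ≤ 1 + s * 1 := by gcongr
        _ ≤ _ := by nlinarith [sq_nonneg (s - 1)]
    apply tendsto_integral_filter_of_dominated_convergence
      (fun s => (1 + s ^ 2)⁻¹ + Real.exp (-1 * s) * 2)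
    · refine Eventually.of_forall fun R => ?_
      apply Measurable.aestronglyMeasurable
      fun_prop
    · filter_upwards [eventually_ge_atTop 1] with R hR
      filter_upwards [ae_restrict_mem measurableSet_Ioi] with s hs
      have hs : 0 < s := hs
      refine (norm_sub_le _ _).trans ?_
      rw [norm_mul, Real.norm_eq_abs, Real.norm_eq_abs, Real.norm_eq_abs, Real.abs_exp,
        abs_of_pos (by positivity : (0:ℝ) < (1 + s ^ 2)⁻¹)]
      have := hb R s hs
      gcongr
    · exact (integrable_inv_one_add_sq.integrableOn).add ((aux_exp_int one_pos).mul_const 2)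
    · filter_upwards [ae_restrict_mem measurableSet_Ioi] with s hs
      have hs : 0 < s := hs
      have h0 : Tendsto (fun R : ℝ => Real.exp (-R * s)
          * ((Real.cos R + s * Real.sin R) / (1 + s ^ 2))) atTop (nhds 0) := by
        have e : Tendsto (fun R : ℝ => Real.exp (-R * s)) atTop (nhds 0) := by
          apply Real.tendsto_exp_atBot.comp
          exact tendsto_neg_atTop_atBot.atBot_mul_const hs
        refine e.zero_mul_isBoundedUnder_le ?_
        exact isBoundedUnder_of ⟨2, fun R => hb R s hs⟩
      simpa using h0.const_sub ((1 + s ^ 2)⁻¹)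
  rw [integral_Ioi_inv_one_add_sq] at key
  simp only [Real.arctan_zero, sub_zero] at key
  refine key.congr' ?_
  filter_upwards [eventually_ge_atTop 0] with R hR
  rw [aux_fubini hR]

noncomputable def auxSi (a : ℝ) : ℝ := ∫ x in (0:ℝ)..a, Real.sinc x

lemma auxSi_neg (a : ℝ) : auxSi (-a) = - auxSi a := by
  unfold auxSi
  have := intervalIntegral.integral_comp_neg (a := 0) (b := a) Real.sinc
  simp only [Real.sinc_neg, neg_zero] at this
  rw [this, intervalIntegral.integral_symm]

lemma auxSi_cont : Continuous auxSi :=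
  intervalIntegral.continuous_primitive (fun a b => Real.continuous_sinc.intervalIntegrable a b) 0

lemma auxSi_bdd : ∃ C, ∀ a, |auxSi a| ≤ C := by
  obtain ⟨M, hM⟩ := (aux_dirichlet.abs.isBoundedUnder_le).eventually_le
  obtain ⟨N, hN⟩ := eventually_atTop.1 hM
  obtain ⟨B, hB⟩ := (isCompact_Icc (a := (0:ℝ)) (b := N)).exists_bound_of_continuousOn
    auxSi_cont.continuousOn
  have hp : ∀ a, 0 ≤ a → |auxSi a| ≤ max M B := by
    intro a ha
    rcases le_total N a with h | h
    · exact le_max_of_le_left (hN a h)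
    · exact le_max_of_le_right (hB a ⟨ha, h⟩)
  refine ⟨max M B, fun a => ?_⟩
  rcases le_total 0 a with h | h
  · exact hp a h
  · have := hp (-a) (by linarith)
    rwa [auxSi_neg, abs_neg] at this

lemma aux_set (ε R : ℝ) (h0 : 0 < ε) : {y : ℝ | ε ≤ |y| ∧ |y| ≤ R} =
    Set.Icc (-R) (-ε) ∪ Set.Icc ε R := by
  ext y
  simp only [Set.mem_ofPred_eq, Set.mem_union, Set.mem_Icc]
  rcases le_total 0 y with h | h
  · rw [abs_of_nonneg h]
    constructor
    · intro h; right; exact h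
    · rintro (h' | h')
      · linarith
      · exact h'
  · rw [abs_of_nonpos h]
    constructor
    · rintro ⟨h1, h2⟩; left; constructor <;> linarith
    · rintro (h' | h')
      · constructor <;> linarith
      · linarith

lemma aux_kernel (ε R u : ℝ) (h0 : 0 < ε) (h1 : ε ≤ R) :
    ∫ y in {y : ℝ | ε ≤ |y| ∧ |y| ≤ R}, Complex.exp (I * (u:ℂ) * (y:ℂ)) / (I * (y:ℂ))
    = ((2 * (auxSi (R * u) - auxSi (ε * u)) : ℝ) : ℂ) := by
  set g : ℝ → ℂ := fun y => Complex.exp (I * (u:ℂ) * (y:ℂ)) / (I * (y:ℂ)) with hg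
  have gc : ∀ s : Set ℝ, (∀ y ∈ s, y ≠ 0) → ContinuousOn g s := by
    intro s hs
    apply ContinuousOn.div (by fun_prop) (by fun_prop)
    intro y hy
    simpa using hs y hy
  have i1 : IntegrableOn g (Set.Icc (-R) (-ε)) :=
    (gc _ (fun y hy => by linarith [hy.2] |> fun (h : y < 0) => h.ne)).integrableOn_Icc
  have gp : ContinuousOn g (Set.Icc ε R) :=
    gc _ (fun y hy => (lt_of_lt_of_le h0 hy.1).ne')
  have i2 : IntegrableOn g (Set.Icc ε R) := gp.integrableOn_Icc
  have gn : ContinuousOn (fun y => g (-y)) (Set.Icc ε R) :=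
    (gc (Set.Icc (-R) (-ε)) (fun y hy => by linarith [hy.2] |> fun (h : y < 0) => h.ne)).comp
      (by fun_prop) (fun y hy => ⟨by linarith [hy.2], by linarith [hy.1]⟩)
  rw [aux_set ε R h0, setIntegral_union _ measurableSet_Icc i1 i2,
    integral_Icc_eq_integral_Ioc, integral_Icc_eq_integral_Ioc,
    ← intervalIntegral.integral_of_le (by linarith), ← intervalIntegral.integral_of_le h1,
    ← intervalIntegral.integral_comp_neg, ← intervalIntegral.integral_add]
  · have : auxSi (R * u) - auxSi (ε * u) = u * ∫ y in ε..R, Real.sinc (u * y) := by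
      rw [intervalIntegral.mul_integral_comp_mul_left]
      unfold auxSi
      rw [intervalIntegral.integral_interval_sub_left
        (Real.continuous_sinc.intervalIntegrable _ _) (Real.continuous_sinc.intervalIntegrable _ _),
        mul_comm R u, mul_comm ε u]
    rw [this, ← mul_assoc, ← intervalIntegral.integral_const_mul, ← intervalIntegral.integral_ofReal]
    apply intervalIntegral.integral_congr
    intro y hy
    rw [Set.uIcc_of_le h1] at hy
    have hy0 : 0 < y := lt_of_lt_of_le h0 hy.1
    have hyc : (y : ℂ) ≠ 0 := by exact_mod_cast hy0.ne'
    have hs : u * Real.sinc (u * y) = Real.sin (u * y) / y := by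
      rcases eq_or_ne u 0 with rfl | hu
      · simp
      · rw [Real.sinc_of_ne_zero (by positivity)]
        field_simp
    simp only [hg]
    rw [mul_assoc 2 u, hs]
    push_cast
    rw [Complex.sin]
    have e1 : I * (u:ℂ) * (y:ℂ) = (u:ℂ) * y * I := by ring
    have e2 : I * (u:ℂ) * (-(y:ℂ)) = -((u:ℂ) * y) * I := by ring
    rw [e1, e2]
    field_simp
    simp only [I_sq]
    ring
  · apply ContinuousOn.intervalIntegrable
    rwa [Set.uIcc_of_le h1]
  · apply ContinuousOn.intervalIntegrable
    rwa [Set.uIcc_of_le h1]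
  · rw [Set.disjoint_left]
    intro y hy hy'
    linarith [hy.2, hy'.1]

lemma aux_lim (u : ℝ) : Tendsto (fun ε : ℝ => 2 * (auxSi (1 / ε * u) - auxSi (ε * u)))
    (nhdsWithin 0 (Set.Ioi 0)) (nhds (Real.pi * SignType.sign u)) := by
  have hz : Tendsto (fun ε : ℝ => auxSi (ε * u)) (nhdsWithin 0 (Set.Ioi 0)) (nhds 0) := by
    have : Continuous (fun ε : ℝ => auxSi (ε * u)) := auxSi_cont.comp (by fun_prop)
    have := this.tendsto 0
    simp only [zero_mul, auxSi, intervalIntegral.integral_same] at this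
    exact this.mono_left nhdsWithin_le_nhds
  have hinv : Tendsto (fun ε : ℝ => 1 / ε) (nhdsWithin 0 (Set.Ioi 0)) atTop := by
    simpa using tendsto_inv_nhdsGT_zero (𝕜 := ℝ)
  have hpos : ∀ v : ℝ, 0 < v → Tendsto (fun ε : ℝ => auxSi (1 / ε * v))
      (nhdsWithin 0 (Set.Ioi 0)) (nhds (Real.pi / 2)) := fun v hv =>
    aux_dirichlet.comp (hinv.atTop_mul_const hv)
  have hl : Tendsto (fun ε : ℝ => auxSi (1 / ε * u))
      (nhdsWithin 0 (Set.Ioi 0)) (nhds (Real.pi / 2 * SignType.sign u)) := by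
    rcases lt_trichotomy u 0 with h | h | h
    · have := (hpos (-u) (by linarith)).neg
      simp only [mul_neg, auxSi_neg, neg_neg] at this
      simpa [sign_neg h] using this
    · subst h
      simp [auxSi]
    · simpa [sign_pos h] using hpos u h
  have := (hl.sub hz).const_mul 2
  convert this using 2
  ring

theorem cdf_fourier_inversion
    (f : ℝ → ℝ)
    (hf_nonneg : ∀ t, 0 ≤ f t)
    (hf_int : MeasureTheory.Integrable f)
    (hf_mass : ∫ t : ℝ, f t = 1)
    (F : ℝ → ℝ) (hF : ∀ x, F x = ∫ t in Set.Iic x, f t)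
    (x : ℝ) (hcont : ContinuousAt F x) :
    Filter.Tendsto
      (fun ε : ℝ =>
        (1 / (2 * Real.pi) : ℂ) *
          ∫ y in {y : ℝ | ε ≤ |y| ∧ |y| ≤ 1 / ε},
            (∫ t : ℝ, (f t : ℂ) * Complex.exp (-Complex.I * (y : ℂ) * (t : ℂ))) /
                (Complex.I * (y : ℂ)) * Complex.exp (Complex.I * (x : ℂ) * (y : ℂ)))
      (nhdsWithin 0 (Set.Ioi 0))
      (nhds ((F x : ℂ) - 1 / 2)) := by
  have swap : ∀ ε : ℝ, 0 < ε → ε ≤ 1 →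
      ∫ y in {y : ℝ | ε ≤ |y| ∧ |y| ≤ 1 / ε},
            (∫ t : ℝ, (f t : ℂ) * Complex.exp (-Complex.I * (y : ℂ) * (t : ℂ))) /
                (Complex.I * (y : ℂ)) * Complex.exp (Complex.I * (x : ℂ) * (y : ℂ))
      = ((∫ t, f t * (2 * (auxSi (1 / ε * (x - t)) - auxSi (ε * (x - t)))) : ℝ) : ℂ) := by
    intro ε h0 h1
    have hR : ε ≤ 1 / ε := by rw [le_div_iff₀ h0]; nlinarith
    have hS : MeasurableSet {y : ℝ | ε ≤ |y| ∧ |y| ≤ 1 / ε} := by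
      rw [aux_set ε _ h0]; measurability
    have hfin : volume {y : ℝ | ε ≤ |y| ∧ |y| ≤ 1 / ε} ≠ ⊤ := by
      rw [aux_set ε _ h0]
      exact measure_union_ne_top (by simp) (by simp)
    have : IsFiniteMeasure (volume.restrict {y : ℝ | ε ≤ |y| ∧ |y| ≤ 1 / ε}) :=
      ⟨by simpa using hfin.lt_top⟩
    have hk : ∀ t : ℝ, ((f t * (2 * (auxSi (1 / ε * (x - t)) - auxSi (ε * (x - t)))) : ℝ) : ℂ)
        = ∫ y in {y : ℝ | ε ≤ |y| ∧ |y| ≤ 1 / ε},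
          (f t : ℂ) * (Complex.exp (I * ((x - t : ℝ):ℂ) * (y:ℂ)) / (I * (y:ℂ))) := by
      intro t
      rw [integral_const_mul, aux_kernel ε _ _ h0 hR]
      push_cast
      rfl
    rw [← integral_complex_ofReal]
    simp_rw [hk]
    rw [integral_integral_swap]
    · apply setIntegral_congr_fun hS
      intro y hy
      simp only
      rw [div_mul_eq_mul_div, mul_div_assoc, ← integral_mul_const]
      congr 1
      ext t
      rw [mul_assoc, mul_div_assoc', ← Complex.exp_add]
      congr 3
      push_cast
      ring
    · have hF2 : Integrable (fun p : ℝ × ℝ => (f p.1 : ℂ))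
          (volume.prod (volume.restrict {y : ℝ | ε ≤ |y| ∧ |y| ≤ 1 / ε})) :=
        (hf_int.ofReal (𝕜 := ℂ)).comp_fst _
      refine hF2.mul_bdd (c := 1 / ε) ?_ ?_
      · apply Measurable.aestronglyMeasurable
        fun_prop
      · have : ∀ᵐ p : ℝ × ℝ ∂(volume.prod (volume.restrict {y : ℝ | ε ≤ |y| ∧ |y| ≤ 1 / ε})),
            p.2 ∈ {y : ℝ | ε ≤ |y| ∧ |y| ≤ 1 / ε} :=
          Measure.quasiMeasurePreserving_snd.ae (ae_restrict_mem hS)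
        filter_upwards [this] with p hp
        have e : I * ((x - p.1 : ℝ):ℂ) * (p.2:ℂ) = (((x - p.1) * p.2 : ℝ) : ℂ) * I := by
          push_cast; ring
        rw [norm_div, e, Complex.norm_exp_ofReal_mul_I, norm_mul, norm_I, one_mul, norm_real,
          Real.norm_eq_abs]
        exact one_div_le_one_div_of_le h0 hp.1
  obtain ⟨C, hC⟩ := auxSi_bdd
  have hlim : Tendsto (fun ε : ℝ =>
      ∫ t, f t * (2 * (auxSi (1 / ε * (x - t)) - auxSi (ε * (x - t)))))
      (nhdsWithin 0 (Set.Ioi 0)) (nhds (∫ t, f t * (Real.pi * SignType.sign (x - t)))) := by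
    apply tendsto_integral_filter_of_dominated_convergence (fun t => f t * (2 * (C + C)))
    · refine Eventually.of_forall fun ε => hf_int.aestronglyMeasurable.mul ?_
      apply Continuous.aestronglyMeasurable
      have := auxSi_cont
      fun_prop
    · refine Eventually.of_forall fun ε => Eventually.of_forall fun t => ?_
      rw [norm_mul, Real.norm_of_nonneg (hf_nonneg t), norm_mul, Real.norm_two]
      have := hf_nonneg t
      gcongr
      exact (norm_sub_le _ _).trans (add_le_add (hC _) (hC _))
    · exact hf_int.mul_const _
    · exact Eventually.of_forall fun t => (aux_lim (x - t)).const_mul _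
  have hval : ∫ t, f t * (Real.pi * SignType.sign (x - t)) = Real.pi * (2 * F x - 1) := by
    have hae : (fun t => f t * (Real.pi * SignType.sign (x - t))) =ᵐ[volume]
        fun t => Real.pi * (2 * (Set.Iic x).indicator f t - f t) := by
      filter_upwards [Measure.ae_ne volume x] with t ht
      rcases lt_or_gt_of_ne ht with h | h
      · rw [sign_pos (by linarith), Set.indicator_of_mem (by exact h.le)]
        simp; ring
      · rw [sign_neg (by linarith), Set.indicator_of_notMem (by simpa using h)]
        simp; ring
    rw [integral_congr_ae hae, integral_const_mul, integral_sub
      ((hf_int.indicator measurableSet_Iic).const_mul 2) hf_int, integral_const_mul,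
      integral_indicator measurableSet_Iic, hf_mass, hF]
  rw [hval] at hlim
  have h2 := ((Complex.continuous_ofReal.tendsto _).comp hlim).const_mul (1 / (2 * Real.pi) : ℂ)
  have hpi : (Real.pi : ℂ) ≠ 0 := by exact_mod_cast Real.pi_ne_zero
  have e : (1 / (2 * Real.pi) : ℂ) * ((Real.pi * (2 * F x - 1) : ℝ) : ℂ) = (F x : ℂ) - 1 / 2 := by
    push_cast
    field_simp
  rw [e] at h2
  refine h2.congr' ?_
  filter_upwards [Ioc_mem_nhdsGT (zero_lt_one (α := ℝ))] with ε hε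
  rw [swap ε hε.1 hε.2]
  rfl
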